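/- arXiv:1401.1409 — 3 statements merged into one kernel-verified Lean document; each statement's English description precedes it below -/
import Mathlib

section
/- Suppose α : A → B is a total integral and M is a (B,A)-module. Define pr_M : M → M as the composite of ρ_M : M → M ⊗_R A, then id_M ⊗ (α ∘ S) : M ⊗_R A → M ⊗_R B, then the B-module action M ⊗_R B → M (so pr_M(m) = Σ α(S(m₍₁₎))·m₍₀₎). Then pr_M is R-linear, pr_M(m) lies in the invariants M^A for every m ∈ M (i.e. ρ_M(pr_M(m)) = pr_M(m) ⊗ 1), and pr_M(m) = m for every m ∈ M^A; in particular pr_M ∘ pr_M = pr_M, so pr_M is a projector of M onto M^A (a Reynolds operator). -/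
open TensorProduct

section ComodDefs

variable (R A : Type*) [CommRing R] [CommRing A] [HopfAlgebra R A]

/-- `ρ : M →ₗ[R] M ⊗[R] A` is a right `A`-comodule structure on `M`:
coassociativity and counitality. -/
def IsComodule {M : Type*} [AddCommGroup M] [Module R M]
    (ρ : M →ₗ[R] M ⊗[R] A) : Prop :=
  ((TensorProduct.assoc R M A A).toLinearMap ∘ₗ ρ.rTensor A ∘ₗ ρ
      = (LinearMap.lTensor M (Coalgebra.comul (R := R) (A := A))) ∘ₗ ρ)
  ∧ ((TensorProduct.rid R M).toLinearMap
      ∘ₗ (LinearMap.lTensor M (Coalgebra.counit (R := R) (A := A))) ∘ₗ ρ = LinearMap.id)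

/-- The invariants `M^A = {m : M | ρ m = m ⊗ 1}` of a comodule. -/
def comodInvariants {M : Type*} [AddCommGroup M] [Module R M]
    (ρ : M →ₗ[R] M ⊗[R] A) : Set M :=
  {m : M | ρ m = m ⊗ₜ[R] (1 : A)}

/-- `α : A → B` is a total integral for the comodule algebra `(B, ρB)`:
a unitary morphism of `A`-comodules. -/
def IsTotalIntegral {B : Type*} [CommRing B] [Algebra R B]
    (ρB : B →ₐ[R] B ⊗[R] A) (α : A →ₗ[R] B) : Prop :=
  α 1 = 1 ∧ ρB.toLinearMap ∘ₗ α
    = (α.rTensor A) ∘ₗ (Coalgebra.comul (R := R) (A := A))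

variable (B : Type*) [CommRing B] [Algebra R B]
variable (M : Type*) [AddCommGroup M] [Module R M] [Module B M] [IsScalarTower R B M]

/-- Scalar multiplication by `b : B` on `M`, as an `R`-linear map. -/
def bsmul (b : B) : M →ₗ[R] M where
  toFun m := b • m
  map_add' := smul_add b
  map_smul' r m := smul_comm b r m

/-- The action of `B ⊗[R] A` on `M ⊗[R] A` (`B` acting on the first factor, `A` by
multiplication on the second). -/
noncomputable def tensorAction : (B ⊗[R] A) →ₗ[R] (M ⊗[R] A) →ₗ[R] (M ⊗[R] A) :=
  TensorProduct.lift <| LinearMap.mk₂ R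
    (fun b a => TensorProduct.map (bsmul R B M b) (LinearMap.mulLeft R a))
    (fun b₁ b₂ a => by
      have h : bsmul R B M (b₁ + b₂) = bsmul R B M b₁ + bsmul R B M b₂ :=
        LinearMap.ext fun m => add_smul b₁ b₂ m
      simp only [h, TensorProduct.map_add_left])
    (fun r b a => by
      have h : bsmul R B M (r • b) = r • bsmul R B M b :=
        LinearMap.ext fun m => smul_assoc r b m
      simp only [h, TensorProduct.map_smul_left])
    (fun b a₁ a₂ => by
      have h : LinearMap.mulLeft R (a₁ + a₂)
          = LinearMap.mulLeft R a₁ + LinearMap.mulLeft R a₂ :=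
        LinearMap.ext fun x => add_mul a₁ a₂ x
      simp only [h, TensorProduct.map_add_right])
    (fun r b a => by
      have h : LinearMap.mulLeft R (r • a) = r • LinearMap.mulLeft R a :=
        LinearMap.ext fun x => smul_mul_assoc r a x
      simp only [h, TensorProduct.map_smul_right])

/-- `(M, ρM)` is a `(B,A)`-module over the comodule algebra `(B, ρB)`: a `B`-module and
a right `A`-comodule whose coaction is `B`-linear, i.e. `ρM (b • m) = ρB b • ρM m`. -/
def IsBAModule (ρB : B →ₐ[R] B ⊗[R] A) (ρM : M →ₗ[R] M ⊗[R] A) : Prop :=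
  IsComodule R A ρM ∧
    ∀ (b : B) (m : M), ρM (b • m) = tensorAction R A B M (ρB b) (ρM m)

/-- The action map `M ⊗[R] B →ₗ[R] M`, `m ⊗ b ↦ b • m`. -/
noncomputable def smulMB : M ⊗[R] B →ₗ[R] M :=
  TensorProduct.lift <| LinearMap.mk₂ R (fun m b => b • m)
    (fun m₁ m₂ b => smul_add b m₁ m₂)
    (fun r m b => smul_comm b r m)
    (fun m b₁ b₂ => add_smul b₁ b₂ m)
    (fun r m b => smul_assoc r b m)

/-- The Reynolds operator `pr_M : M → M`, `m ↦ Σ α (S m₍₁₎) • m₍₀₎`: the composite of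
`ρ_M : M → M ⊗ A`, then `id_M ⊗ (α ∘ S) : M ⊗ A → M ⊗ B`, then the `B`-action
`M ⊗ B → M`. -/
noncomputable def reynolds (α : A →ₗ[R] B) (ρM : M →ₗ[R] M ⊗[R] A) : M →ₗ[R] M :=
  smulMB R B M ∘ₗ (LinearMap.lTensor M (α ∘ₗ HopfAlgebra.antipode (R := R))) ∘ₗ ρM

end ComodDefs

section Helpers

open WithConv Coalgebra

variable {R A : Type*} [CommRing R] [CommRing A] [HopfAlgebra R A]

/-- Convolution identity `Σ (1 ⊗ a₁) * δ (S a₂) = S a ⊗ 1`. -/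
lemma conv_key :
    toConv (Algebra.TensorProduct.includeRight : A →ₐ[R] A ⊗[R] A).toLinearMap
      * toConv (comul ∘ₗ HopfAlgebra.antipode (R := R) (A := A))
    = toConv ((Algebra.TensorProduct.includeLeft : A →ₐ[R] A ⊗[R] A).toLinearMap
        ∘ₗ HopfAlgebra.antipode (R := R)) := by
  set i1 := (Algebra.TensorProduct.includeLeft : A →ₐ[R] A ⊗[R] A)
  set i2 := (Algebra.TensorProduct.includeRight : A →ₐ[R] A ⊗[R] A)
  have h1 : toConv (i1.toLinearMap ∘ₗ HopfAlgebra.antipode (R := R)) * toConv i1.toLinearMap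
      = 1 := by
    have h := LinearMap.algHom_comp_convMul_distrib i1
      (toConv (HopfAlgebra.antipode R (A := A))) (toConv LinearMap.id)
    rw [LinearMap.antipode_mul_id] at h
    have h' := congrArg toConv h
    simp only [ofConv_toConv, toConv_ofConv, LinearMap.comp_id] at h'
    rw [← h']
    ext c
    simp [LinearMap.convOne_def]
  have h2 : toConv i1.toLinearMap * toConv i2.toLinearMap = toConv (comul (R := R) (A := A)) := by
    ext c
    rw [(ℛ R c).convMul_apply]
    simp [i1, i2, (ℛ R c).eq]
  have h3 := LinearMap.comul_right_inv (R := R) (C := A)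
  calc _ = 1 * toConv i2.toLinearMap * toConv (comul ∘ₗ HopfAlgebra.antipode (R := R)) := by
        rw [one_mul]
    _ = toConv (i1.toLinearMap ∘ₗ HopfAlgebra.antipode (R := R)) *
        ((toConv i1.toLinearMap * toConv i2.toLinearMap) *
          toConv (comul ∘ₗ HopfAlgebra.antipode (R := R))) := by
        rw [← h1]; simp only [mul_assoc]
    _ = _ := by rw [h2, h3, mul_one]

variable {B M : Type*} [CommRing B] [Algebra R B]
  [AddCommGroup M] [Module R M] [Module B M] [IsScalarTower R B M]

lemma tensorAction_tmul (b : B) (a : A) (m : M) (c : A) :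
    tensorAction R A B M (b ⊗ₜ a) (m ⊗ₜ c) = (b • m) ⊗ₜ (a * c) := rfl

lemma smulMB_tmul (b : B) (m : M) : smulMB R B M (m ⊗ₜ b) = b • m := rfl

/-- `(m, y) ↦ (α ⊗ id) y • (m ⊗ 1)`. -/
noncomputable def helperQ (α : A →ₗ[R] B) : M →ₗ[R] (A ⊗[R] A) →ₗ[R] M ⊗[R] A :=
  LinearMap.lcomp R _ (α.rTensor A) ∘ₗ (tensorAction R A B M).flip ∘ₗ
    (TensorProduct.mk R M A).flip 1

lemma helperQ_apply (α : A →ₗ[R] B) (m : M) (y : A ⊗[R] A) :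
    helperQ α m y = tensorAction R A B M (α.rTensor A y) (m ⊗ₜ 1) := rfl

lemma helperQ_mul (α : A →ₗ[R] B) (m : M) (a : A) (y : A ⊗[R] A) :
    helperQ α m ((1 ⊗ₜ a) * y) = tensorAction R A B M (α.rTensor A y) (m ⊗ₜ a) := by
  induction y with
  | zero => simp
  | add x y hx hy => simp only [mul_add, map_add, hx, hy, LinearMap.add_apply]
  | tmul b c => simp [helperQ_apply, tensorAction_tmul, mul_comm]

/-- `a ⊗ c ↦ (1 ⊗ a) * δ (S c)`. -/
noncomputable def helperK : A ⊗[R] A →ₗ[R] A ⊗[R] A :=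
  LinearMap.mul' R (A ⊗[R] A) ∘ₗ TensorProduct.map
    (Algebra.TensorProduct.includeRight : A →ₐ[R] A ⊗[R] A).toLinearMap
    (comul ∘ₗ HopfAlgebra.antipode (R := R) (A := A))

lemma helperK_comul (a : A) :
    helperK (comul (R := R) a) = HopfAlgebra.antipode R a ⊗ₜ[R] (1 : A) :=
  congrArg (fun f => f.ofConv a) (conv_key (R := R) (A := A))

noncomputable def helperP (α : A →ₗ[R] B) : M ⊗[R] (A ⊗[R] A) →ₗ[R] M ⊗[R] A :=
  TensorProduct.lift (LinearMap.lcomp R _ helperK ∘ₗ helperQ α)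

lemma helperP_tmul (α : A →ₗ[R] B) (m : M) (z : A ⊗[R] A) :
    helperP α (m ⊗ₜ z) = helperQ α m (helperK z) := rfl

lemma helperP_assoc (α : A →ₗ[R] B) (x : M ⊗[R] A) (c : A) :
    helperP α (TensorProduct.assoc R M A A (x ⊗ₜ c)) =
      tensorAction R A B M (α.rTensor A (comul (HopfAlgebra.antipode R c))) x := by
  induction x with
  | zero => simp
  | add x y hx hy => simp only [TensorProduct.add_tmul, map_add, hx, hy]
  | tmul m a =>
    rw [← helperQ_mul, TensorProduct.assoc_tmul, helperP_tmul]
    rfl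

lemma helperP_comul (α : A →ₗ[R] B) (x : M ⊗[R] A) :
    helperP α (LinearMap.lTensor M comul x) =
      smulMB R B M (LinearMap.lTensor M (α ∘ₗ HopfAlgebra.antipode (R := R)) x) ⊗ₜ[R] (1 : A) := by
  induction x with
  | zero => simp
  | add x y hx hy => simp only [TensorProduct.add_tmul, map_add, hx, hy]
  | tmul m a =>
    simp [helperP_tmul, helperK_comul, helperQ_apply, tensorAction_tmul, smulMB_tmul]

lemma coaction_smulMB (ρB : B →ₐ[R] B ⊗[R] A) (α : A →ₗ[R] B) (hα : IsTotalIntegral R A ρB α)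
    (ρM : M →ₗ[R] M ⊗[R] A) (hM : IsBAModule R A B M ρB ρM) (x : M ⊗[R] A) :
    ρM (smulMB R B M (LinearMap.lTensor M (α ∘ₗ HopfAlgebra.antipode (R := R)) x)) =
      helperP α (TensorProduct.assoc R M A A (ρM.rTensor A x)) := by
  induction x with
  | zero => simp
  | add x y hx hy => simp only [map_add, hx, hy]
  | tmul m a =>
    rw [LinearMap.rTensor_tmul, helperP_assoc, LinearMap.lTensor_tmul, smulMB_tmul, hM.2]
    congr 2
    exact LinearMap.congr_fun hα.2 (HopfAlgebra.antipode R a)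

end Helpers



/-- Given a total integral `α : A → B` and a `(B,A)`-module `M`, the Reynolds operator
`pr_M (m) = Σ α (S m₍₁₎) • m₍₀₎` (which is `R`-linear by construction) takes values in
the invariants `M^A`, restricts to the identity on `M^A`, and hence is idempotent:
a projector of `M` onto `M^A`. -/
theorem reynolds_projection_onto_invariants
    {R A B M : Type*} [CommRing R] [CommRing A] [HopfAlgebra R A]
    [CommRing B] [Algebra R B]
    [AddCommGroup M] [Module R M] [Module B M] [IsScalarTower R B M]
    (ρB : B →ₐ[R] B ⊗[R] A) (hB : IsComodule R A ρB.toLinearMap)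
    (α : A →ₗ[R] B) (hα : IsTotalIntegral R A ρB α)
    (ρM : M →ₗ[R] M ⊗[R] A) (hM : IsBAModule R A B M ρB ρM) :
    (∀ m : M, reynolds R A B M α ρM m ∈ comodInvariants R A ρM) ∧
    (∀ m ∈ comodInvariants R A ρM, reynolds R A B M α ρM m = m) ∧
    (∀ m : M, reynolds R A B M α ρM (reynolds R A B M α ρM m)
      = reynolds R A B M α ρM m) := by
  have h1 : ∀ m : M, reynolds R A B M α ρM m ∈ comodInvariants R A ρM := by
    intro m
    change ρM (smulMB R B M (LinearMap.lTensor M (α ∘ₗ HopfAlgebra.antipode (R := R)) (ρM m)))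
      = smulMB R B M (LinearMap.lTensor M (α ∘ₗ HopfAlgebra.antipode (R := R)) (ρM m)) ⊗ₜ[R] (1 : A)
    rw [coaction_smulMB ρB α hα ρM hM, ← helperP_comul]
    exact congrArg _ (LinearMap.congr_fun hM.1.1 m)
  have h2 : ∀ m ∈ comodInvariants R A ρM, reynolds R A B M α ρM m = m := by
    intro m hm
    have hm' : ρM m = m ⊗ₜ[R] (1 : A) := hm
    change smulMB R B M (LinearMap.lTensor M (α ∘ₗ HopfAlgebra.antipode (R := R)) (ρM m)) = m
    rw [hm', LinearMap.lTensor_tmul, smulMB_tmul, LinearMap.comp_apply,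
      HopfAlgebra.antipode_one, hα.1, one_smul]
  exact ⟨h1, h2, fun m => h2 _ (h1 m)⟩
end

section
/- Suppose there exists a total integral α : A → B (i.e. the action is tame). Then the functor of invariants on (B,A)-modules is exact: for every short exact sequence 0 → M₁ → M₂ → M₃ → 0 of (B,A)-modules (the maps being morphisms of (B,A)-modules and the sequence exact as a sequence of R-modules), the induced sequence of invariants 0 → M₁^A → M₂^A → M₃^A → 0 is exact. -/
open TensorProduct

section Aux

open HopfAlgebra Coalgebra WithConv

lemma aux_comul_antipode {R A : Type*} [CommRing R] [CommRing A] [HopfAlgebra R A] (a : A) :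
    comul (R := R) (antipode R a)
      = TensorProduct.map (antipode R) (antipode R) (TensorProduct.comm R A A (comul (R := R) a)) := by
  let i1 : WithConv (A →ₐ[R] A ⊗[R] A) := toConv Algebra.TensorProduct.includeLeft
  let i2 : WithConv (A →ₐ[R] A ⊗[R] A) := toConv Algebra.TensorProduct.includeRight
  have h : i1 * i2 = toConv (Bialgebra.comulAlgHom R A) := by
    apply WithConv.ext
    rw [AlgHom.convMul_def]
    have : ((Algebra.TensorProduct.lmul' R).comp
        (Algebra.TensorProduct.map i1.ofConv i2.ofConv)) = AlgHom.id R (A ⊗[R] A) := by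
      ext <;> simp [i1, i2]
    change ((Algebra.TensorProduct.lmul' R).comp
        (Algebra.TensorProduct.map i1.ofConv i2.ofConv)).comp _ = _
    rw [this]; rfl
  have h2 : (toConv (Bialgebra.comulAlgHom R A))⁻¹ = i2⁻¹ * i1⁻¹ := by
    rw [← h]
    exact mul_inv_rev i1 i2
  have h3 := congrArg (fun f => f.ofConv a) h2
  have h4 : (Algebra.TensorProduct.lmul' R (S := A ⊗[R] A)).toLinearMap ∘ₗ
      TensorProduct.map (i2⁻¹).ofConv.toLinearMap (i1⁻¹).ofConv.toLinearMap
      = TensorProduct.map (antipode R) (antipode R) ∘ₗ (TensorProduct.comm R A A).toLinearMap := by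
    ext x y
    change (1 ⊗ₜ[R] antipode R x) * (antipode R y ⊗ₜ[R] 1) = antipode R y ⊗ₜ[R] antipode R x
    simp
  exact h3.trans (LinearMap.congr_fun h4 (comul a))

variable {R A B M N : Type*} [CommRing R] [CommRing A] [HopfAlgebra R A]
  [CommRing B] [Algebra R B]
  [AddCommGroup M] [Module R M] [Module B M] [IsScalarTower R B M]
  [AddCommGroup N] [Module R N] [Module B N] [IsScalarTower R B N]

/-- `c ⊗ (x ⊗ y) ↦ α (S y) • m ⊗ S x * c`. -/
noncomputable def auxT (α : A →ₗ[R] B) (m : M) : A ⊗[R] (A ⊗[R] A) →ₗ[R] M ⊗[R] A :=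
  TensorProduct.lift
    (((LinearMap.llcomp R (A ⊗[R] A) (M ⊗[R] A) (M ⊗[R] A)).flip
      (TensorProduct.map ((LinearMap.toSpanSingleton B M m).restrictScalars R ∘ₗ α ∘ₗ antipode R)
        (antipode R) ∘ₗ (TensorProduct.comm R A A).toLinearMap)) ∘ₗ
      (LinearMap.lTensorHom M) ∘ₗ (LinearMap.mul R A))

lemma auxT_tmul (α : A →ₗ[R] B) (m : M) (c x y : A) :
    auxT α m (c ⊗ₜ (x ⊗ₜ y)) = (α (antipode R y) • m) ⊗ₜ[R] (antipode R x * c) := by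
  simp [auxT, mul_comm]

lemma auxT_comul (α : A →ₗ[R] B) (m : M) (a : A) :
    auxT α m ((comul (R := R) (A := A)).lTensor A (comul a))
      = (α (antipode R a) • m) ⊗ₜ[R] (1 : A) := by
  rw [← Coalgebra.coassoc_apply]
  have h1 : ∀ z : A ⊗[R] A, ∀ y : A, auxT α m (TensorProduct.assoc R A A A (z ⊗ₜ y))
      = (α (antipode R y) • m) ⊗ₜ[R] LinearMap.mul' R A ((antipode R).lTensor A z) := by
    intro z y
    induction z with
    | zero => simp
    | add p q hp hq => simp only [TensorProduct.add_tmul, map_add, hp, hq, TensorProduct.tmul_add]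
    | tmul c x => simp [auxT_tmul, mul_comm]
  have h2 : ∀ z : A ⊗[R] A, auxT α m (TensorProduct.assoc R A A A
      ((comul (R := R) (A := A)).rTensor A z))
      = ((α (antipode R (TensorProduct.lid R A ((counit (R := R) (A := A)).rTensor A z)))) • m)
        ⊗ₜ[R] (1 : A) := by
    intro z
    induction z with
    | zero => simp
    | add p q hp hq => simp only [map_add, hp, hq, add_smul, TensorProduct.add_tmul]
    | tmul c x =>
      simp [h1, Algebra.algebraMap_eq_smul_one, TensorProduct.smul_tmul']
  rw [h2]
  simp

lemma aux_action (ρB : B →ₐ[R] B ⊗[R] A) (α : A →ₗ[R] B) (hα : IsTotalIntegral R A ρB α)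
    (m : M) (c a : A) :
    tensorAction R A B M (ρB (α (antipode R a))) (m ⊗ₜ c)
      = auxT α m (c ⊗ₜ comul (R := R) a) := by
  have h := LinearMap.congr_fun hα.2 (antipode R a)
  simp only [LinearMap.comp_apply, AlgHom.toLinearMap_apply, aux_comul_antipode] at h
  rw [h]
  generalize comul (R := R) a = z
  induction z with
  | zero => simp
  | add p q hp hq => simp only [map_add, LinearMap.add_apply, hp, hq, TensorProduct.tmul_add]
  | tmul x y => simp [auxT_tmul, tensorAction, bsmul]

lemma reynolds_mem (ρB : B →ₐ[R] B ⊗[R] A) (α : A →ₗ[R] B) (hα : IsTotalIntegral R A ρB α)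
    (ρ : M →ₗ[R] M ⊗[R] A) (h : IsBAModule R A B M ρB ρ) (m : M) :
    reynolds R A B M α ρ m ∈ comodInvariants R A ρ := by
  obtain ⟨⟨hco, -⟩, hact⟩ := h
  -- `Θ (m ⊗ (c ⊗ a)) = ρB (α (S a)) • (m ⊗ c)`
  let Θ : (M ⊗[R] A) ⊗[R] A →ₗ[R] M ⊗[R] A :=
    TensorProduct.lift ((tensorAction R A B M ∘ₗ ρB.toLinearMap ∘ₗ α ∘ₗ antipode R).flip)
  have h1 : ρ ∘ₗ smulMB R B M ∘ₗ (LinearMap.lTensor M (α ∘ₗ antipode R))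
      = Θ ∘ₗ ρ.rTensor A := by
    ext m a
    simp [Θ, smulMB, hact]
  have h2 : Θ ∘ₗ (TensorProduct.assoc R M A A).symm.toLinearMap ∘ₗ
      (LinearMap.lTensor M (comul (R := R) (A := A)))
      = (TensorProduct.mk R M A).flip 1 ∘ₗ smulMB R B M ∘ₗ
        (LinearMap.lTensor M (α ∘ₗ antipode R)) := by
    ext m a
    have h3 : ∀ z : A ⊗[R] A, Θ ((TensorProduct.assoc R M A A).symm (m ⊗ₜ z))
        = auxT α m ((comul (R := R) (A := A)).lTensor A z) := by
      intro z
      induction z with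
      | zero => simp
      | add p q hp hq => simp only [map_add, TensorProduct.tmul_add, hp, hq]
      | tmul c x => simp [Θ, aux_action ρB α hα]
    simp [h3, auxT_comul, smulMB]
  have e1 := LinearMap.congr_fun h1 (ρ m)
  have e2 := LinearMap.congr_fun h2 (ρ m)
  have e3 := LinearMap.congr_fun hco m
  simp only [LinearMap.comp_apply, LinearEquiv.coe_coe] at e1 e2 e3
  rw [← e3, LinearEquiv.symm_apply_apply, ← e1] at e2
  exact e2

lemma reynolds_of_mem (ρB : B →ₐ[R] B ⊗[R] A) (α : A →ₗ[R] B) (hα : IsTotalIntegral R A ρB α)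
    (ρ : M →ₗ[R] M ⊗[R] A) (m : M) (hm : m ∈ comodInvariants R A ρ) :
    reynolds R A B M α ρ m = m := by
  have hm' : ρ m = m ⊗ₜ[R] (1 : A) := hm
  simp [reynolds, hm', smulMB, hα.1]

lemma reynolds_nat (α : A →ₗ[R] B) (ρ : M →ₗ[R] M ⊗[R] A) (ρ' : N →ₗ[R] N ⊗[R] A)
    (f : M →ₗ[B] N)
    (hf : ρ' ∘ₗ (f.restrictScalars R) = ((f.restrictScalars R).rTensor A) ∘ₗ ρ) (m : M) :
    reynolds R A B N α ρ' (f m) = f (reynolds R A B M α ρ m) := by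
  have h := LinearMap.congr_fun hf m
  simp only [LinearMap.comp_apply, LinearMap.restrictScalars_apply] at h
  simp only [reynolds, LinearMap.comp_apply, h]
  generalize ρ m = z
  induction z with
  | zero => simp
  | add p q hp hq => simp only [map_add, hp, hq]
  | tmul x y => simp [smulMB]

lemma map_mem (ρ : M →ₗ[R] M ⊗[R] A) (ρ' : N →ₗ[R] N ⊗[R] A)
    (f : M →ₗ[B] N)
    (hf : ρ' ∘ₗ (f.restrictScalars R) = ((f.restrictScalars R).rTensor A) ∘ₗ ρ) (m : M)
    (hm : m ∈ comodInvariants R A ρ) : f m ∈ comodInvariants R A ρ' := by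
  have h := LinearMap.congr_fun hf m
  have hm' : ρ m = m ⊗ₜ[R] (1 : A) := hm
  simp only [LinearMap.comp_apply, LinearMap.restrictScalars_apply, hm'] at h
  exact h

end Aux

/-- If the action is tame (a total integral `α : A → B` exists), then the functor of
invariants on `(B,A)`-modules is exact: for every short exact sequence
`0 → M₁ → M₂ → M₃ → 0` of `(B,A)`-modules, the sequence of invariants
`0 → M₁^A → M₂^A → M₃^A → 0` is exact. -/
theorem invariants_exact_of_total_integral
    {R A B M₁ M₂ M₃ : Type*} [CommRing R] [CommRing A] [HopfAlgebra R A]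
    [CommRing B] [Algebra R B]
    [AddCommGroup M₁] [Module R M₁] [Module B M₁] [IsScalarTower R B M₁]
    [AddCommGroup M₂] [Module R M₂] [Module B M₂] [IsScalarTower R B M₂]
    [AddCommGroup M₃] [Module R M₃] [Module B M₃] [IsScalarTower R B M₃]
    (ρB : B →ₐ[R] B ⊗[R] A) (hB : IsComodule R A ρB.toLinearMap)
    (htame : ∃ α : A →ₗ[R] B, IsTotalIntegral R A ρB α)
    (ρ₁ : M₁ →ₗ[R] M₁ ⊗[R] A) (h₁ : IsBAModule R A B M₁ ρB ρ₁)
    (ρ₂ : M₂ →ₗ[R] M₂ ⊗[R] A) (h₂ : IsBAModule R A B M₂ ρB ρ₂)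
    (ρ₃ : M₃ →ₗ[R] M₃ ⊗[R] A) (h₃ : IsBAModule R A B M₃ ρB ρ₃)
    (f : M₁ →ₗ[B] M₂)
    (hf : ρ₂ ∘ₗ (f.restrictScalars R) = ((f.restrictScalars R).rTensor A) ∘ₗ ρ₁)
    (g : M₂ →ₗ[B] M₃)
    (hg : ρ₃ ∘ₗ (g.restrictScalars R) = ((g.restrictScalars R).rTensor A) ∘ₗ ρ₂)
    (hinj : Function.Injective f)
    (hsurj : Function.Surjective g)
    (hexact : LinearMap.range f = LinearMap.ker g) :
    Set.InjOn f (comodInvariants R A ρ₁) ∧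
    (f '' comodInvariants R A ρ₁ = {m ∈ comodInvariants R A ρ₂ | g m = 0}) ∧
    (g '' comodInvariants R A ρ₂ = comodInvariants R A ρ₃) := by
  obtain ⟨α, hα⟩ := htame
  refine ⟨hinj.injOn, ?_, ?_⟩
  · ext m
    constructor
    · rintro ⟨x, hx, rfl⟩
      refine ⟨map_mem ρ₁ ρ₂ f hf x hx, ?_⟩
      have : f x ∈ LinearMap.ker g := hexact ▸ LinearMap.mem_range_self f x
      exact this
    · rintro ⟨hm, hgm⟩
      have : m ∈ LinearMap.range f := hexact ▸ (LinearMap.mem_ker.2 hgm)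
      obtain ⟨x, rfl⟩ := this
      refine ⟨reynolds R A B M₁ α ρ₁ x, reynolds_mem ρB α hα ρ₁ h₁ x, ?_⟩
      rw [← reynolds_nat α ρ₁ ρ₂ f hf, reynolds_of_mem ρB α hα ρ₂ _ hm]
  · ext m
    constructor
    · rintro ⟨x, hx, rfl⟩
      exact map_mem ρ₂ ρ₃ g hg x hx
    · intro hm
      obtain ⟨x, rfl⟩ := hsurj m
      refine ⟨reynolds R A B M₂ α ρ₂ x, reynolds_mem ρB α hα ρ₂ h₂ x, ?_⟩
      rw [← reynolds_nat α ρ₂ ρ₃ g hg, reynolds_of_mem ρB α hα ρ₃ _ hm]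
end

section
/- Let B be an A-comodule algebra with invariants C = B^A. The base change C ⊗_R A is a Hopf algebra over C, coacting on itself via id_C ⊗ δ; B is a right (C ⊗_R A)-comodule via ρ_B followed by the canonical isomorphism B ⊗_R A ≅ B ⊗_C (C ⊗_R A); and C ⊗_R B is a right (C ⊗_R A)-comodule over C via id_C ⊗ ρ_B (followed by the canonical isomorphism (C ⊗_R B) ⊗_C (C ⊗_R A) ≅ C ⊗_R (B ⊗_R A)). Then the following are equivalent: (1) there exists a C-linear (C ⊗_R A)-comodule morphism C ⊗_R A → B sending 1⊗1 to 1_B; (2) there exists a total integral A → B; (3) there exists a C-linear (C ⊗_R A)-comodule morphism C ⊗_R A → C ⊗_R B sending 1⊗1 to 1⊗1. -/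
open TensorProduct

set_option synthInstance.maxHeartbeats 1000000
set_option maxHeartbeats 1000000

/-- The invariants `C = B^A` of a comodule algebra, as a subalgebra of `B`. -/
def invariantsSubalgebra (R A B : Type*) [CommRing R] [CommRing A] [HopfAlgebra R A]
    [CommRing B] [Algebra R B] (ρB : B →ₐ[R] B ⊗[R] A) : Subalgebra R B where
  carrier := comodInvariants R A ρB.toLinearMap
  mul_mem' := fun {a b} ha hb => by
    simp only [comodInvariants, Set.mem_setOf_eq, AlgHom.toLinearMap_apply] at *
    rw [map_mul, ha, hb, Algebra.TensorProduct.tmul_mul_tmul, one_mul]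
  one_mem' := by
    simp only [comodInvariants, Set.mem_setOf_eq, AlgHom.toLinearMap_apply, map_one,
      Algebra.TensorProduct.one_def]
  add_mem' := fun {a b} ha hb => by
    simp only [comodInvariants, Set.mem_setOf_eq] at *
    rw [map_add, ha, hb, TensorProduct.add_tmul]
  zero_mem' := by
    simp only [comodInvariants, Set.mem_setOf_eq, map_zero, TensorProduct.zero_tmul]
  algebraMap_mem' := fun r => by
    simp only [comodInvariants, Set.mem_setOf_eq, AlgHom.toLinearMap_apply,
      AlgHom.commutes, Algebra.TensorProduct.algebraMap_apply]

/-- Multiplication `C ⊗ B → B`, for a subalgebra `C` of `B`. -/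
noncomputable def subMul {R B : Type*} [CommRing R] [CommRing B] [Algebra R B]
    (C : Subalgebra R B) : C ⊗[R] B →ₗ[R] B :=
  TensorProduct.lift ((LinearMap.mul R B) ∘ₗ C.val.toLinearMap)

theorem subMul_tmul {R B : Type*} [CommRing R] [CommRing B] [Algebra R B]
    (C : Subalgebra R B) (c : C) (b : B) : subMul C (c ⊗ₜ[R] b) = (c : B) * b := rfl

theorem subMul_comod {R A B : Type*} [CommRing R] [CommRing A] [HopfAlgebra R A]
    [CommRing B] [Algebra R B] (ρB : B →ₐ[R] B ⊗[R] A)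
    (x : invariantsSubalgebra R A B ρB ⊗[R] B) :
    ρB (subMul _ x) = (subMul (invariantsSubalgebra R A B ρB)).rTensor A
      ((TensorProduct.assoc R (invariantsSubalgebra R A B ρB) B A).symm
        (LinearMap.lTensor (invariantsSubalgebra R A B ρB) ρB.toLinearMap x)) := by
  induction x using TensorProduct.induction_on with
  | zero => simp only [map_zero]
  | add x y hx hy => simp only [map_add, hx, hy]
  | tmul c b =>
    have hc : ρB (c : B) = (c : B) ⊗ₜ[R] (1 : A) := c.2
    rw [subMul_tmul, map_mul, hc, LinearMap.lTensor_tmul, AlgHom.toLinearMap_apply]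
    generalize ρB b = t
    induction t using TensorProduct.induction_on with
    | zero => simp only [map_zero, mul_zero, TensorProduct.tmul_zero]
    | add x y hx hy => simp only [map_add, mul_add, TensorProduct.tmul_add, hx, hy]
    | tmul b a =>
      rw [TensorProduct.assoc_symm_tmul, LinearMap.rTensor_tmul, subMul_tmul,
        Algebra.TensorProduct.tmul_mul_tmul, one_mul]

theorem assoc_symm_lTensor_rTensor {R A B C : Type*} [CommRing R] [CommRing A] [Algebra R A]
    [CommRing B] [Algebra R B] [CommRing C] [Algebra R C] (α : A →ₗ[R] B) (c : C)
    (t : A ⊗[R] A) :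
    (TensorProduct.assoc R C B A).symm (c ⊗ₜ[R] (α.rTensor A t))
      = (α.lTensor C).rTensor A ((TensorProduct.assoc R C A A).symm (c ⊗ₜ[R] t)) := by
  induction t using TensorProduct.induction_on with
  | zero => simp only [map_zero, TensorProduct.tmul_zero]
  | add x y hx hy => simp only [map_add, TensorProduct.tmul_add, hx, hy]
  | tmul a a' => simp

theorem rTensor_one_tmul {R A B C : Type*} [CommRing R] [CommRing A] [Algebra R A]
    [CommRing B] [Algebra R B] [CommRing C] [Algebra R C] (β : C ⊗[R] A →ₗ[R] B)
    (t : A ⊗[R] A) :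
    β.rTensor A ((TensorProduct.assoc R C A A).symm ((1 : C) ⊗ₜ[R] t))
      = (β ∘ₗ TensorProduct.mk R C A 1).rTensor A t := by
  induction t using TensorProduct.induction_on with
  | zero => simp only [map_zero, TensorProduct.tmul_zero]
  | add x y hx hy => simp only [map_add, TensorProduct.tmul_add, hx, hy]
  | tmul a a' => simp

/-- Let `B` be an `A`-comodule algebra with invariants `C = B^A`.  Under the canonical
identifications (`B ⊗_C (C ⊗_R A) ≅ B ⊗_R A`, `(C ⊗_R B) ⊗_C (C ⊗_R A) ≅ C ⊗_R (B ⊗_R A)`,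
`(C ⊗_R A) ⊗_C (C ⊗_R A) ≅ C ⊗_R (A ⊗_R A)`, and with `C ⊗_R A` the base-changed Hopf
algebra over `C`, coacting on itself by `id_C ⊗ δ`), the following are equivalent:
(1) there is a unitary `C`-linear `(C ⊗_R A)`-comodule morphism `C ⊗_R A → B`;
(2) there is a total integral `A → B`;
(3) there is a unitary `C`-linear `(C ⊗_R A)`-comodule morphism `C ⊗_R A → C ⊗_R B`. -/
theorem tame_iff_baseChanged_total_integrals
    {R A B : Type*} [CommRing R] [CommRing A] [HopfAlgebra R A]
    [CommRing B] [Algebra R B]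
    (ρB : B →ₐ[R] B ⊗[R] A) (hB : IsComodule R A ρB.toLinearMap) :
    ((∃ β : (invariantsSubalgebra R A B ρB ⊗[R] A) →ₗ[R] B,
        (∀ (c : invariantsSubalgebra R A B ρB) (x : invariantsSubalgebra R A B ρB ⊗[R] A),
          β (c • x) = c • β x) ∧
        β ((1 : invariantsSubalgebra R A B ρB) ⊗ₜ[R] (1 : A)) = 1 ∧
        ρB.toLinearMap ∘ₗ β
          = (β.rTensor A)
            ∘ₗ (TensorProduct.assoc R (invariantsSubalgebra R A B ρB) A A).symm.toLinearMap
            ∘ₗ LinearMap.lTensor (invariantsSubalgebra R A B ρB)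
                (Coalgebra.comul (R := R) (A := A)))
      ↔ ∃ α : A →ₗ[R] B, IsTotalIntegral R A ρB α) ∧
    ((∃ α : A →ₗ[R] B, IsTotalIntegral R A ρB α)
      ↔ ∃ γ : (invariantsSubalgebra R A B ρB ⊗[R] A) →ₗ[R]
            (invariantsSubalgebra R A B ρB ⊗[R] B),
        (∀ (c : invariantsSubalgebra R A B ρB) (x : invariantsSubalgebra R A B ρB ⊗[R] A),
          γ (c • x) = c • γ x) ∧
        γ ((1 : invariantsSubalgebra R A B ρB) ⊗ₜ[R] (1 : A))
          = (1 : invariantsSubalgebra R A B ρB) ⊗ₜ[R] (1 : B) ∧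
        LinearMap.lTensor (invariantsSubalgebra R A B ρB) ρB.toLinearMap ∘ₗ γ
          = (TensorProduct.assoc R (invariantsSubalgebra R A B ρB) B A).toLinearMap
            ∘ₗ (γ.rTensor A)
            ∘ₗ (TensorProduct.assoc R (invariantsSubalgebra R A B ρB) A A).symm.toLinearMap
            ∘ₗ LinearMap.lTensor (invariantsSubalgebra R A B ρB)
                (Coalgebra.comul (R := R) (A := A))) := by
  have h12 : (∃ β : (invariantsSubalgebra R A B ρB ⊗[R] A) →ₗ[R] B,
        β ((1 : invariantsSubalgebra R A B ρB) ⊗ₜ[R] (1 : A)) = 1 ∧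
        ρB.toLinearMap ∘ₗ β
          = (β.rTensor A)
            ∘ₗ (TensorProduct.assoc R (invariantsSubalgebra R A B ρB) A A).symm.toLinearMap
            ∘ₗ LinearMap.lTensor (invariantsSubalgebra R A B ρB)
                (Coalgebra.comul (R := R) (A := A)))
      → ∃ α : A →ₗ[R] B, IsTotalIntegral R A ρB α := by
    rintro ⟨β, h1, h2⟩
    refine ⟨β ∘ₗ TensorProduct.mk R _ A 1, h1, ?_⟩
    ext a
    have h := LinearMap.congr_fun h2 ((1 : invariantsSubalgebra R A B ρB) ⊗ₜ[R] a)
    refine h.trans ?_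
    exact rTensor_one_tmul β _
  have h23 : ∀ α : A →ₗ[R] B, IsTotalIntegral R A ρB α →
      LinearMap.lTensor (invariantsSubalgebra R A B ρB) ρB.toLinearMap ∘ₗ
          α.lTensor (invariantsSubalgebra R A B ρB)
          = (TensorProduct.assoc R (invariantsSubalgebra R A B ρB) B A).toLinearMap
            ∘ₗ ((α.lTensor (invariantsSubalgebra R A B ρB)).rTensor A)
            ∘ₗ (TensorProduct.assoc R (invariantsSubalgebra R A B ρB) A A).symm.toLinearMap
            ∘ₗ LinearMap.lTensor (invariantsSubalgebra R A B ρB)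
                (Coalgebra.comul (R := R) (A := A)) := by
    rintro α ⟨h1, h2⟩
    refine TensorProduct.ext' fun c a => ?_
    have h : ρB (α a) = α.rTensor A (Coalgebra.comul (R := R) a) := LinearMap.congr_fun h2 a
    simp only [LinearMap.comp_apply, LinearMap.lTensor_tmul, LinearEquiv.coe_coe,
      AlgHom.toLinearMap_apply]
    rw [h, ← assoc_symm_lTensor_rTensor, LinearEquiv.apply_symm_apply]
  have hm : ∀ γ : (invariantsSubalgebra R A B ρB ⊗[R] A) →ₗ[R]
            (invariantsSubalgebra R A B ρB ⊗[R] B),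
        LinearMap.lTensor (invariantsSubalgebra R A B ρB) ρB.toLinearMap ∘ₗ γ
          = (TensorProduct.assoc R (invariantsSubalgebra R A B ρB) B A).toLinearMap
            ∘ₗ (γ.rTensor A)
            ∘ₗ (TensorProduct.assoc R (invariantsSubalgebra R A B ρB) A A).symm.toLinearMap
            ∘ₗ LinearMap.lTensor (invariantsSubalgebra R A B ρB)
                (Coalgebra.comul (R := R) (A := A)) →
        ρB.toLinearMap ∘ₗ (subMul _ ∘ₗ γ)
          = ((subMul _ ∘ₗ γ).rTensor A)
            ∘ₗ (TensorProduct.assoc R (invariantsSubalgebra R A B ρB) A A).symm.toLinearMap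
            ∘ₗ LinearMap.lTensor (invariantsSubalgebra R A B ρB)
                (Coalgebra.comul (R := R) (A := A)) := by
    intro γ h
    refine LinearMap.ext fun x => ?_
    have hx := LinearMap.congr_fun h x
    simp only [LinearMap.comp_apply, LinearEquiv.coe_coe, AlgHom.toLinearMap_apply] at hx ⊢
    rw [subMul_comod, hx, LinearEquiv.symm_apply_apply, LinearMap.rTensor_comp_apply]
  have hsmul : ∀ (α : A →ₗ[R] B) (c : invariantsSubalgebra R A B ρB)
      (x : invariantsSubalgebra R A B ρB ⊗[R] A),
      α.lTensor (invariantsSubalgebra R A B ρB) (c • x)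
        = c • α.lTensor (invariantsSubalgebra R A B ρB) x := by
    intro α c x
    induction x using TensorProduct.induction_on with
    | zero => simp only [smul_zero, map_zero]
    | add x y hx hy => simp only [smul_add, map_add, hx, hy]
    | tmul d a => simp only [TensorProduct.smul_tmul', LinearMap.lTensor_tmul]
  have hsmul' : ∀ (c : invariantsSubalgebra R A B ρB)
      (x : invariantsSubalgebra R A B ρB ⊗[R] B),
      subMul (invariantsSubalgebra R A B ρB) (c • x)
        = c • subMul (invariantsSubalgebra R A B ρB) x := by
    intro c x
    induction x using TensorProduct.induction_on with
    | zero => simp only [smul_zero, map_zero]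
    | add x y hx hy => simp only [smul_add, map_add, hx, hy]
    | tmul d a =>
      rw [TensorProduct.smul_tmul', subMul_tmul, subMul_tmul]
      exact mul_assoc _ _ _
  refine ⟨⟨fun ⟨β, _, h1, h2⟩ => h12 ⟨β, h1, h2⟩, ?_⟩, ?_, ?_⟩
  · rintro ⟨α, hα⟩
    refine ⟨subMul _ ∘ₗ α.lTensor _, ?_, ?_, hm _ (h23 α hα)⟩
    · intro c x
      rw [LinearMap.comp_apply, hsmul, hsmul', LinearMap.comp_apply]
    · rw [LinearMap.comp_apply, LinearMap.lTensor_tmul, subMul_tmul, hα.1]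
      exact one_mul _
  · rintro ⟨α, hα⟩
    exact ⟨α.lTensor _, hsmul α, by rw [LinearMap.lTensor_tmul, hα.1], h23 α hα⟩
  · rintro ⟨γ, _, h1, h2⟩
    refine h12 ⟨subMul _ ∘ₗ γ, ?_, hm γ h2⟩
    rw [LinearMap.comp_apply, h1, subMul_tmul]
    exact one_mul _
end
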